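/- Let A, B, X be points of ℝ² with X not lying on the segment [A, B]. Then for all points P, Q on the segment [A, B], the angle ∠(P − X, Q − X) is at most ∠(A − X, B − X). Hence the aperture angle of X with respect to the segment [A, B] equals the angle ∠ A X B subtended by its endpoints. -/

import Mathlib

open Real InnerProductGeometry

/-!
Seen from a point `x`, the angle subtended by a segment adds up when the segment is cut at one of
its points, so shortening a segment from either end does not increase the angle. Two points `p`, `q`
of `[a, b]` are reached by cutting `[a, b]` down twice, after exchanging them if necessary. The one
configuration in which additivity is unavailable, a cut at `x` itself, has `∠ a x b = π`.
-/

open scoped EuclideanGeometry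

theorem wbtw_total_of_wbtw {R V P : Type*} [Field R] [LinearOrder R] [IsStrictOrderedRing R]
    [AddCommGroup V] [Module R V] [AddTorsor V P] {a b p q : P}
    (hp : Wbtw R a p b) (hq : Wbtw R a q b) : Wbtw R a p q ∨ Wbtw R a q p := by
  obtain ⟨s, ⟨hs, -⟩, rfl⟩ := hp
  obtain ⟨t, ⟨ht, -⟩, rfl⟩ := hq
  exact wbtw_or_wbtw_smul_vadd_of_nonneg a (b -ᵥ a) hs ht

variable {V P : Type*} [NormedAddCommGroup V] [InnerProductSpace ℝ V] [MetricSpace P]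
  [NormedAddTorsor V P] {a b p q x : P}

/-- The aperture angle of the point `x` with respect to the set `s`: the supremum of the angles at
`x` subtended by pairs of points of `s`. Pairs containing `x` itself are not excluded; they
contribute the conventional value `∠ x x q = π / 2`. -/
noncomputable def apertureAngle (s : Set P) (x : P) : ℝ :=
  sSup {θ : ℝ | ∃ p ∈ s, ∃ q ∈ s, θ = ∠ p x q}

theorem apertureAngle_eq_of_forall_angle_le {s : Set P} (ha : a ∈ s) (hb : b ∈ s)
    (h : ∀ p ∈ s, ∀ q ∈ s, ∠ p x q ≤ ∠ a x b) : apertureAngle s x = ∠ a x b := by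
  refine IsGreatest.csSup_eq ⟨⟨a, ha, b, hb, rfl⟩, ?_⟩
  rintro _ ⟨p, hp, q, hq, rfl⟩
  exact h p hp q hq

theorem angle_le_angle_of_wbtw_right (ha : a ≠ x) (hb : b ≠ x) (hp : Wbtw ℝ a p b) :
    ∠ a x p ≤ ∠ a x b := by
  rw [← EuclideanGeometry.angle_add_of_ne_of_ne ha.symm hb.symm hp]
  exact le_add_of_nonneg_right (EuclideanGeometry.angle_nonneg p x b)

theorem angle_le_angle_of_wbtw_left (ha : a ≠ x) (hb : b ≠ x) (hp : Wbtw ℝ a p b) :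
    ∠ p x b ≤ ∠ a x b := by
  simpa only [EuclideanGeometry.angle_comm _ x b] using
    angle_le_angle_of_wbtw_right hb ha hp.symm

theorem angle_le_angle_of_wbtw_of_wbtw (ha : a ≠ x) (hb : b ≠ x)
    (hq : Wbtw ℝ a q b) (hp : Wbtw ℝ a p q) : ∠ p x q ≤ ∠ a x b := by
  obtain rfl | hqx := eq_or_ne q x
  · have hqab : Sbtw ℝ a q b := ⟨hq, ha.symm, hb.symm⟩
    rw [hqab.angle₁₂₃_eq_pi]
    exact EuclideanGeometry.angle_le_pi p q q
  · calc ∠ p x q ≤ ∠ a x q := angle_le_angle_of_wbtw_left ha hqx hp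
      _ ≤ ∠ a x b := angle_le_angle_of_wbtw_right ha hb hq

theorem angle_le_angle_of_mem_affineSegment (ha : a ≠ x) (hb : b ≠ x)
    (hp : p ∈ affineSegment ℝ a b) (hq : q ∈ affineSegment ℝ a b) : ∠ p x q ≤ ∠ a x b := by
  obtain hpq | hqp := wbtw_total_of_wbtw hp hq
  · exact angle_le_angle_of_wbtw_of_wbtw ha hb hq hpq
  · rw [EuclideanGeometry.angle_comm]
    exact angle_le_angle_of_wbtw_of_wbtw ha hb hp hqp

theorem aperture_angle_of_segment_general (ha : a ≠ x) (hb : b ≠ x) :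
    (∀ p ∈ affineSegment ℝ a b, ∀ q ∈ affineSegment ℝ a b, ∠ p x q ≤ ∠ a x b) ∧
      apertureAngle (affineSegment ℝ a b) x = ∠ a x b := by
  have hle : ∀ p ∈ affineSegment ℝ a b, ∀ q ∈ affineSegment ℝ a b, ∠ p x q ≤ ∠ a x b :=
    fun _ hp _ hq => angle_le_angle_of_mem_affineSegment ha hb hp hq
  exact ⟨hle, apertureAngle_eq_of_forall_angle_le
    (left_mem_affineSegment ℝ a b) (right_mem_affineSegment ℝ a b) hle⟩

theorem aperture_angle_of_segment
    (A B X : EuclideanSpace ℝ (Fin 2)) (hX : X ∉ segment ℝ A B) :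
    (∀ P ∈ segment ℝ A B, ∀ Q ∈ segment ℝ A B,
      InnerProductGeometry.angle (P - X) (Q - X) ≤
        InnerProductGeometry.angle (A - X) (B - X)) ∧
    sSup {θ : ℝ | ∃ P ∈ segment ℝ A B, ∃ Q ∈ segment ℝ A B,
        θ = InnerProductGeometry.angle (P - X) (Q - X)} =
      InnerProductGeometry.angle (A - X) (B - X) := by
  rw [← affineSegment_eq_segment] at hX ⊢
  exact aperture_angle_of_segment_general
    (ne_of_mem_of_not_mem (left_mem_affineSegment ℝ A B) hX)
    (ne_of_mem_of_not_mem (right_mem_affineSegment ℝ A B) hX)
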